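/- arXiv:1911.12432 — 2 statements merged into one kernel-verified Lean document; each statement's English description precedes it below -/
import Mathlib

section
/- Let e₁,…,e_m be an enumeration of E with w(e₁) ≥ w(e₂) ≥ … ≥ w(e_m), and define M recursively by M₀=∅ and Mᵢ = M_{i−1}∪{eᵢ} if M_{i−1}∪{eᵢ} is a d-distance matching, Mᵢ = M_{i−1} otherwise; let M = M_m (the output of the greedy algorithm). Then 3·w(M) ≥ w(M*) for every d-distance matching M* of G. -/
open Finset

/-- `M` is a `d`-distance matching of the bipartite graph with left node set `Fin n`
(ordered) and right node set `T`, whose edge set is `E`. -/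
def DDM {n : ℕ} {T : Type*} [DecidableEq T] (d : ℕ) (E M : Finset (Fin n × T)) : Prop :=
  M ⊆ E ∧ (∀ e ∈ M, ∀ f ∈ M, e.1 = f.1 → e = f) ∧
    (∀ e ∈ M, ∀ f ∈ M, e.2 = f.2 → e ≠ f → d ≤ Nat.dist e.1.val f.1.val)

open Classical in
/-- The greedy algorithm: scan the edges in the given order and add an edge whenever the
result is still a feasible `d`-distance matching. -/
noncomputable def greedyList {n : ℕ} {T : Type*} [DecidableEq T] (d : ℕ)
    (E : Finset (Fin n × T)) :
    List (Fin n × T) → Finset (Fin n × T) → Finset (Fin n × T)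
  | [], M => M
  | e :: rest, M =>
      greedyList d E rest (if DDM d E (insert e M) then insert e M else M)

/-!
Two edges conflict if they cannot both lie in a `d`-distance matching. When the greedy algorithm
rejects an edge, that edge conflicts with one chosen earlier, hence at least as heavy. So every edge
of a feasible `Ms` can be charged to a conflicting greedy edge of at least its weight. A greedy edge
`(s, t)` is charged at most three times: two edges conflicting with it from the same side of `s`
conflict with each other, so `Ms` contains at most one from the left of `s`, one at `s` itself and
one from the right.
-/

/-- Two edges conflict if no `d`-distance matching contains both of them, as distinct edges.
To keep the relation free of side conditions, every edge conflicts with itself. -/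
def EdgeConflict {n : ℕ} {T : Type*} (d : ℕ) (e f : Fin n × T) : Prop :=
  e.1 = f.1 ∨ (e.2 = f.2 ∧ Nat.dist e.1.val f.1.val < d)

section DoubleCounting

variable {α β R : Type*} [AddCommMonoid R] [PartialOrder R] [IsOrderedAddMonoid R]

theorem sum_le_nsmul_sum_of_card_bipartiteBelow_le {s : Finset α} {t : Finset β}
    (r : α → β → Prop) [∀ a b, Decidable (r a b)] {k : ℕ} {u : α → R} {v : β → R}
    (hv : ∀ b ∈ t, 0 ≤ v b) (hr : ∀ a ∈ s, ∃ b ∈ t, u a ≤ v b ∧ r a b)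
    (hk : ∀ b ∈ t, #(s.bipartiteBelow r b) ≤ k) :
    ∑ a ∈ s, u a ≤ k • ∑ b ∈ t, v b := by
  have hu : ∀ a ∈ s, u a ≤ ∑ b ∈ t.bipartiteAbove r a, v b := fun a ha => by
    obtain ⟨b, hb, hab, hrab⟩ := hr a ha
    exact hab.trans (single_le_sum (fun c hc => hv c ((mem_bipartiteAbove r).1 hc).1)
      ((mem_bipartiteAbove r).2 ⟨hb, hrab⟩))
  calc ∑ a ∈ s, u a
      ≤ ∑ a ∈ s, ∑ b ∈ t.bipartiteAbove r a, v b := sum_le_sum hu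
    _ = ∑ b ∈ t, ∑ _a ∈ s.bipartiteBelow r b, v b :=
        sum_sum_bipartiteAbove_eq_sum_sum_bipartiteBelow r fun _ b => v b
    _ = ∑ b ∈ t, #(s.bipartiteBelow r b) • v b := by simp only [sum_const]
    _ ≤ ∑ b ∈ t, k • v b := sum_le_sum fun b hb => nsmul_le_nsmul_left (hv b hb) (hk b hb)
    _ = k • ∑ b ∈ t, v b := sum_nsmul t k v

end DoubleCounting

section Conflict

variable {n : ℕ} {T : Type*} {d : ℕ} {e e' f : Fin n × T}

theorem EdgeConflict.refl (d : ℕ) (e : Fin n × T) : EdgeConflict d e e :=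
  Or.inl rfl

theorem EdgeConflict.symm (h : EdgeConflict d e f) : EdgeConflict d f e := by
  rwa [EdgeConflict, eq_comm, @eq_comm _ f.2, Nat.dist_comm]

theorem EdgeConflict.of_cmp_eq (he : EdgeConflict d e f) (he' : EdgeConflict d e' f)
    (hcmp : cmp e.1 f.1 = cmp e'.1 f.1) : EdgeConflict d e e' := by
  have hlt : e.1 < f.1 ↔ e'.1 < f.1 := lt_iff_lt_of_cmp_eq_cmp hcmp
  have heq : e.1 = f.1 ↔ e'.1 = f.1 := eq_iff_eq_of_cmp_eq_cmp hcmp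
  rcases he with h | ⟨ht, hdist⟩
  · exact Or.inl (h.trans (heq.1 h).symm)
  rcases he' with h' | ⟨ht', hdist'⟩
  · exact Or.inl ((heq.2 h').trans h'.symm)
  refine Or.inr ⟨ht.trans ht'.symm, ?_⟩
  simp only [Fin.lt_def, Fin.ext_iff, Nat.dist] at hlt heq hdist hdist' ⊢
  omega

variable [DecidableEq T] {E M : Finset (Fin n × T)}

theorem ddm_iff_pairwise_not_edgeConflict :
    DDM d E M ↔ M ⊆ E ∧ (M : Set (Fin n × T)).Pairwise fun e f => ¬ EdgeConflict d e f := by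
  simp only [DDM, EdgeConflict, Set.Pairwise, mem_coe, not_or, not_and, not_lt]
  grind

theorem ddm_empty : DDM d E ∅ := by
  simp [ddm_iff_pairwise_not_edgeConflict]

theorem DDM.eq_of_edgeConflict (hM : DDM d E M) (he : e ∈ M) (hf : f ∈ M)
    (h : EdgeConflict d e f) : e = f :=
  (ddm_iff_pairwise_not_edgeConflict.1 hM).2.eq he hf (not_not_intro h)

theorem DDM.insert_of_forall_not_edgeConflict (hM : DDM d E M) (he : e ∈ E)
    (h : ∀ f ∈ M, ¬ EdgeConflict d e f) : DDM d E (insert e M) := by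
  obtain ⟨hME, hpair⟩ := ddm_iff_pairwise_not_edgeConflict.1 hM
  rw [ddm_iff_pairwise_not_edgeConflict, coe_insert]
  exact ⟨insert_subset he hME,
    hpair.insert fun f hf _ => ⟨h f hf, fun hfe => h f hf hfe.symm⟩⟩

theorem DDM.card_bipartiteBelow_edgeConflict_le_three
    [DecidableRel (EdgeConflict (n := n) (T := T) d)] (hM : DDM d E M) (f : Fin n × T) :
    #(M.bipartiteBelow (EdgeConflict d) f) ≤ 3 := by
  have hinj : Set.InjOn (fun e : Fin n × T => cmp e.1 f.1)
      (M.bipartiteBelow (EdgeConflict d) f) := fun e he e' he' hcmp => by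
    obtain ⟨heM, hef⟩ := (mem_bipartiteBelow _).1 he
    obtain ⟨heM', hef'⟩ := (mem_bipartiteBelow _).1 he'
    exact hM.eq_of_edgeConflict heM heM' (hef.of_cmp_eq hef' hcmp)
  exact card_le_card_of_injOn (t := (univ : Finset Ordering)) _ (fun _ _ => mem_univ _) hinj

end Conflict

section Greedy

variable {n : ℕ} {T : Type*} [DecidableEq T] {d : ℕ} {E M : Finset (Fin n × T)}

theorem greedyList_append (d : ℕ) (E : Finset (Fin n × T)) (l₁ l₂ : List (Fin n × T))
    (M : Finset (Fin n × T)) :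
    greedyList d E (l₁ ++ l₂) M = greedyList d E l₂ (greedyList d E l₁ M) := by
  induction l₁ generalizing M with
  | nil => rfl
  | cons _ _ ih => exact ih _

theorem subset_greedyList (d : ℕ) (E : Finset (Fin n × T)) (l : List (Fin n × T))
    (M : Finset (Fin n × T)) : M ⊆ greedyList d E l M := by
  induction l generalizing M with
  | nil => exact Subset.refl M
  | cons e l ih =>
    rw [greedyList]
    split_ifs
    · exact (subset_insert e M).trans (ih _)
    · exact ih M

theorem greedyList_subset_union_toFinset (d : ℕ) (E : Finset (Fin n × T))
    (l : List (Fin n × T)) (M : Finset (Fin n × T)) :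
    greedyList d E l M ⊆ M ∪ l.toFinset := by
  induction l generalizing M with
  | nil => exact subset_union_left
  | cons e l ih =>
    rw [greedyList, List.toFinset_cons, union_insert, ← insert_union]
    split_ifs
    · exact ih _
    · exact (ih M).trans (union_subset_union_left (subset_insert e M))

theorem ddm_greedyList (hM : DDM d E M) (l : List (Fin n × T)) :
    DDM d E (greedyList d E l M) := by
  induction l generalizing M with
  | nil => exact hM
  | cons e l ih =>
    rw [greedyList]
    split_ifs with h
    · exact ih h
    · exact ih hM

theorem exists_edgeConflict_mem_greedyList_cons {e : Fin n × T} (hM : DDM d E M)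
    (he : e ∈ E) (l : List (Fin n × T)) :
    ∃ f ∈ greedyList d E (e :: l) M, f ∈ insert e M ∧ EdgeConflict d e f := by
  rw [greedyList]
  split_ifs with hfeas
  · exact ⟨e, subset_greedyList d E l _ (mem_insert_self e M), mem_insert_self e M,
      EdgeConflict.refl d e⟩
  · obtain ⟨f, hfM, hef⟩ : ∃ f ∈ M, EdgeConflict d e f := by
      by_contra! hfree
      exact hfeas (hM.insert_of_forall_not_edgeConflict he hfree)
    exact ⟨f, subset_greedyList d E l M hfM, mem_insert_of_mem hfM, hef⟩

theorem exists_le_edgeConflict_mem_greedyList {R : Type*} [Preorder R] {w : Fin n × T → R}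
    {l : List (Fin n × T)} {e : Fin n × T} (hsort : l.Pairwise fun e f => w f ≤ w e)
    (heE : e ∈ E) (hel : e ∈ l) :
    ∃ f ∈ greedyList d E l ∅, w e ≤ w f ∧ EdgeConflict d e f := by
  obtain ⟨l₁, l₂, rfl⟩ := List.append_of_mem hel
  have hle : ∀ f ∈ l₁, w e ≤ w f := fun f hf =>
    (List.pairwise_append.1 hsort).2.2 f hf e List.mem_cons_self
  rw [greedyList_append]
  obtain ⟨f, hf, hfe, hef⟩ :=
    exists_edgeConflict_mem_greedyList_cons (ddm_greedyList ddm_empty l₁) heE l₂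
  refine ⟨f, hf, ?_, hef⟩
  rcases mem_insert.1 hfe with rfl | hf₁
  · exact le_rfl
  · exact hle f (by simpa using greedyList_subset_union_toFinset d E l₁ ∅ hf₁)

theorem stmt2_general {R : Type*} [AddCommMonoid R] [PartialOrder R] [IsOrderedAddMonoid R]
    {w : Fin n × T → R} (hw : ∀ e ∈ E, 0 ≤ w e) {l : List (Fin n × T)} (hl : E ⊆ l.toFinset)
    (hsort : l.Pairwise fun e f => w f ≤ w e) {Ms : Finset (Fin n × T)} (hMs : DDM d E Ms) :
    ∑ e ∈ Ms, w e ≤ 3 • ∑ e ∈ greedyList d E l ∅, w e := by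
  classical
  have hgreedy : greedyList d E l ∅ ⊆ E := (ddm_greedyList ddm_empty l).1
  refine sum_le_nsmul_sum_of_card_bipartiteBelow_le (EdgeConflict d)
    (fun f hf => hw f (hgreedy hf)) (fun e he => ?_)
    fun f _ => hMs.card_bipartiteBelow_edgeConflict_le_three f
  have heE : e ∈ E := hMs.1 he
  exact exists_le_edgeConflict_mem_greedyList hsort heE (List.mem_toFinset.1 (hl heE))

end Greedy

/-- `Greedy`, run on the edges listed in non-increasing order of weight, is a
3-approximation algorithm for the weighted `d`-distance matching problem. -/
theorem stmt2 {n : ℕ} {T : Type*} [DecidableEq T]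
    (d : ℕ) (hd : 1 ≤ d) (E : Finset (Fin n × T)) (w : Fin n × T → ℝ)
    (hw : ∀ e ∈ E, 0 ≤ w e)
    (l : List (Fin n × T)) (hnd : l.Nodup) (hlE : l.toFinset = E)
    (hsort : l.Pairwise (fun e f => w f ≤ w e)) :
    ∀ Ms, DDM d E Ms → ∑ e ∈ Ms, w e ≤ 3 * ∑ e ∈ greedyList d E l ∅, w e := by
  intro Ms hMs
  simpa only [nsmul_eq_mul, Nat.cast_ofNat] using stmt2_general hw hlE.ge hsort hMs
end

section
/- There exist a rational optimal solution x ∈ ℚ₊^E of LP1 and an order e₁=s¹t¹,…,e_m=sᵐtᵐ of the edges of G that is (2 − 1/(2d−1))-flat with respect to x. -/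
open Finset

/-- `x` is a feasible solution of LP1: `x ≥ 0`, supported on `E`,
`Σ_{e ∈ Δ(s)} x_e ≤ 1` for every `s ∈ S`, and
`Σ_{s't ∈ E, s' ∈ R_d(s)} x_{s't} ≤ 1` for every `s ∈ S`, `t ∈ T`. -/
def FeasLP1 {n : ℕ} {T : Type*} [DecidableEq T] {R : Type*} [Field R] [LinearOrder R] [IsStrictOrderedRing R]
    (d : ℕ) (E : Finset (Fin n × T)) (x : Fin n × T → R) : Prop :=
  (∀ e, 0 ≤ x e) ∧ (∀ e ∉ E, x e = 0) ∧
  (∀ s : Fin n, ∑ e ∈ E.filter (fun e => e.1 = s), x e ≤ 1) ∧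
  (∀ s : Fin n, ∀ t : T,
    ∑ e ∈ E.filter (fun e => e.2 = t ∧ s.val ≤ e.1.val ∧ e.1.val < s.val + d), x e ≤ 1)

/-- The list `l` of edges `e₁, …, e_m` is a `θ`-flat order with respect to `x`:
for every `i`, `ξᵢ + ξ̄ᵢ ≤ θ − x_{eᵢ}`, where `ξᵢ` sums `x` over the later edges sharing
the `S`-node of `eᵢ`, and `ξ̄ᵢ` sums `x` over the later edges at the `T`-node of `eᵢ`
whose `S`-node lies in `L_d(sⁱ) ∪ R_d(sⁱ)`. -/
def IsFlatOrder {n : ℕ} {T : Type*} [DecidableEq T] {R : Type*} [Field R] [LinearOrder R] [IsStrictOrderedRing R]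
    (d : ℕ) (θ : R) (x : Fin n × T → R) (l : List (Fin n × T)) : Prop :=
  ∀ i : Fin l.length,
    (∑ j ∈ Finset.univ.filter
        (fun j : Fin l.length => i < j ∧ (l.get j).1 = (l.get i).1), x (l.get j)) +
    (∑ j ∈ Finset.univ.filter
        (fun j : Fin l.length => i < j ∧ (l.get j).2 = (l.get i).2 ∧
          Nat.dist (l.get j).1.val (l.get i).1.val < d), x (l.get j))
    ≤ θ - x (l.get i)

/-!
*Flatness.* Every feasible solution `x` admits a flat order, built greedily: given a nonempty set
`F` of remaining edges, look at the `k` edges of `F` at its leftmost node `s`. Let `σ ≤ 1` be their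
total weight, and for each such edge `e` let `a e` be the weight of the other edges of `F` near `e`
at the `T`-node of `e`. As nothing lies to the left of `s`, the constraints of LP1 give
`a e + x e ≤ 1` and, since only `d - 1` further nodes are involved, `∑ a e ≤ d - 1`. So some `e` has
`a e ≤ min (1 - σ / k) ((d - 1) / k)`, and then `σ + a e ≤ 2 - 1 / d`, by the first bound if `k ≤ d`
and by the second if `d ≤ k`; such an `e` may come first. This improves on `2 - 1 / (2d - 1)`.

*Rationality.* Let `y` be a real optimal solution, and let `φ : ℝ → ℚ` be `ℚ`-linear with `φ 1 = 1`.
If `φ` is close to the identity on the finitely many constraint values of `y`, then it preserves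
the rational inequalities among them, so both `φ ∘ y` and its reflection `2 y - φ ∘ y` in `y` are
feasible. Their objective values average to the optimum, so the rational point `φ ∘ y` is optimal.
-/

open Filter Topology

section RationalApproximation

/-- A sequence of `ℚ`-linear endomorphisms of `ℝ`, eventually fixing `1`, that converges pointwise
to the identity. Applied coordinatewise to a real point of a rational polyhedron, such maps
eventually stay in the polyhedron. They are taken `ℝ`-valued, and not `ℚ`-valued, so that the notion
is stable under `φ ↦ 2 - φ`. -/
structure IsRatApprox (φ : ℕ → ℝ →ₗ[ℚ] ℝ) : Prop where
  map_one : ∀ᶠ k in atTop, φ k 1 = 1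
  tendsto : ∀ v, Tendsto (fun k => φ k v) atTop (𝓝 v)

theorem exists_ratLinear_tendsto :
    ∃ ψ : ℕ → ℝ →ₗ[ℚ] ℚ, ∀ v : ℝ, Tendsto (fun k => (ψ k v : ℝ)) atTop (𝓝 v) := by
  let b := Module.Basis.ofVectorSpace ℚ ℝ
  choose u _ _ hu using fun i => Real.exists_seq_rat_strictAnti_tendsto (b i)
  refine ⟨fun k => b.constr ℚ fun i => u i k, fun v => ?_⟩
  induction b.mem_span v using Submodule.span_induction with
  | mem v hv =>
    obtain ⟨i, rfl⟩ := hv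
    simpa using hu i
  | zero => simp
  | add v v' _ _ hv hv' => simpa using hv.add hv'
  | smul q v _ hv =>
    simpa only [map_smul, smul_eq_mul, Rat.cast_mul, ← Rat.smul_def] using hv.const_smul q

theorem exists_isRatApprox_ratCast :
    ∃ ψ : ℕ → ℝ →ₗ[ℚ] ℚ, IsRatApprox fun k => Algebra.linearMap ℚ ℝ ∘ₗ ψ k := by
  obtain ⟨ψ, hψ⟩ := exists_ratLinear_tendsto
  refine ⟨fun k => (ψ k 1)⁻¹ • ψ k, ?_, fun v => ?_⟩
  · filter_upwards [(hψ 1).eventually_ne one_ne_zero] with k hk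
    have : ψ k 1 ≠ 0 := by exact_mod_cast hk
    simp [this]
  · simpa using ((hψ 1).inv₀ one_ne_zero).mul (hψ v)

namespace IsRatApprox

variable {φ : ℕ → ℝ →ₗ[ℚ] ℝ}

theorem reflect (hφ : IsRatApprox φ) : IsRatApprox fun k => (2 : ℚ) • LinearMap.id - φ k where
  map_one := by
    filter_upwards [hφ.map_one] with k hk
    norm_num [hk, Rat.smul_def]
  tendsto v := by
    simpa [Rat.smul_def, two_mul] using (hφ.tendsto v).const_sub (2 * v)

theorem eventually_le (hφ : IsRatApprox φ) {v : ℝ} {q : ℚ} (h : v ≤ q) :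
    ∀ᶠ k in atTop, φ k v ≤ q := by
  rcases h.eq_or_lt with rfl | h
  · filter_upwards [hφ.map_one] with k hk
    have hq : φ k q = q := by
      simpa [hk, Rat.smul_def] using (φ k).map_smul q 1
    exact hq.le
  · exact ((hφ.tendsto v).eventually_lt_const h).mono fun _ => le_of_lt

theorem eventually_nonneg (hφ : IsRatApprox φ) {v : ℝ} (h : 0 ≤ v) :
    ∀ᶠ k in atTop, 0 ≤ φ k v := by
  simpa using hφ.eventually_le (v := -v) (q := 0) (by simpa using h)

theorem eventually_forall_sum_le {α : Type*} (hφ : IsRatApprox φ) (E : Finset α) (y : α → ℝ)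
    (q : ℚ) : ∀ᶠ k in atTop, ∀ A ⊆ E, ∑ e ∈ A, y e ≤ q → ∑ e ∈ A, φ k (y e) ≤ q := by
  simp only [← mem_powerset, eventually_all_finset, eventually_imp_distrib_left, ← map_sum]
  exact fun A _ h => hφ.eventually_le h

end IsRatApprox

theorem exists_rat_isMaxOn {α : Type*} {P : Set (α → ℝ)} {y : α → ℝ}
    (hy : ∀ φ, IsRatApprox φ → ∀ᶠ k in atTop, φ k ∘ y ∈ P) (f : (α → ℝ) →ₗ[ℝ] ℝ)
    (hmax : IsMaxOn f P y) : ∃ x : α → ℚ, (↑) ∘ x ∈ P ∧ IsMaxOn f P ((↑) ∘ x) := by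
  obtain ⟨ψ, hψ⟩ := exists_isRatApprox_ratCast
  obtain ⟨k, hx, hrefl⟩ := ((hy _ hψ).and (hy _ hψ.reflect)).exists
  refine ⟨ψ k ∘ y, hx, isMaxOn_iff.2 fun v hv => (isMaxOn_iff.1 hmax v hv).trans ?_⟩
  have hrefl' : (2 : ℝ) • y - (↑) ∘ ψ k ∘ y ∈ P := by
    convert hrefl using 1
    ext e
    simp [Rat.smul_def]
  have hle := isMaxOn_iff.1 hmax _ hrefl'
  rw [map_sub, map_smul, smul_eq_mul] at hle
  linarith

end RationalApproximation

section RationalOptimum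

variable {n : ℕ} {T : Type*} [DecidableEq T] {d : ℕ} {E : Finset (Fin n × T)}

theorem feasLP1_ratCast_iff {x : Fin n × T → ℚ} :
    FeasLP1 d E ((↑) ∘ x : Fin n × T → ℝ) ↔ FeasLP1 d E x := by
  simp only [FeasLP1, Function.comp_apply]
  norm_cast

theorem FeasLP1.le_one {R : Type*} [Field R] [LinearOrder R] [IsStrictOrderedRing R]
    {x : Fin n × T → R} (hx : FeasLP1 d E x) (e : Fin n × T) : x e ≤ 1 := by
  obtain ⟨h0, hE, hS, -⟩ := hx
  by_cases he : e ∈ E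
  · have hmem : e ∈ E.filter fun f => f.1 = e.1 := mem_filter.2 ⟨he, rfl⟩
    exact (single_le_sum (fun f _ => h0 f) hmem).trans (hS e.1)
  · simp [hE e he]

theorem FeasLP1.eventually_comp {y : Fin n × T → ℝ} (hy : FeasLP1 d E y)
    {φ : ℕ → ℝ →ₗ[ℚ] ℝ} (hφ : IsRatApprox φ) : ∀ᶠ k in atTop, FeasLP1 d E (φ k ∘ y) := by
  obtain ⟨h0, hE, hS, hT⟩ := hy
  have hnonneg : ∀ᶠ k in atTop, ∀ e ∈ E, 0 ≤ φ k (y e) :=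
    (eventually_all_finset E).2 fun e _ => hφ.eventually_nonneg (h0 e)
  filter_upwards [hnonneg, hφ.eventually_forall_sum_le E y 1] with k hk0 hk1
  have hkE : ∀ e ∉ E, φ k (y e) = 0 := fun e he => by rw [hE e he, map_zero]
  rw [Rat.cast_one] at hk1
  refine ⟨fun e => ?_, hkE, fun s => hk1 _ (filter_subset _ _) (hS s),
    fun s t => hk1 _ (filter_subset _ _) (hT s t)⟩
  by_cases he : e ∈ E
  · exact hk0 e he
  · exact (hkE e he).ge

theorem isCompact_setOf_feasLP1 (d : ℕ) (E : Finset (Fin n × T)) :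
    IsCompact {y : Fin n × T → ℝ | FeasLP1 d E y} := by
  refine (isCompact_univ_pi fun _ => isCompact_Icc (a := (0 : ℝ)) (b := 1)).of_isClosed_subset
    ?_ fun y hy e _ => ⟨hy.1 e, hy.le_one e⟩
  simp only [FeasLP1, Set.ofPred_and, Set.ofPred_forall]
  refine .inter (isClosed_iInter fun e => ?_) <| .inter (isClosed_biInter fun e _ => ?_) <|
    .inter (isClosed_iInter fun s => ?_) (isClosed_iInter fun s => isClosed_iInter fun t => ?_)
  · exact isClosed_le continuous_const (continuous_apply e)
  · exact isClosed_eq (continuous_apply e) continuous_const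
  · exact isClosed_le (by fun_prop) continuous_const
  · exact isClosed_le (by fun_prop) continuous_const

theorem exists_rat_optimal_feasLP1 (d : ℕ) (E : Finset (Fin n × T)) (w : Fin n × T → ℝ) :
    ∃ x : Fin n × T → ℚ, FeasLP1 d E x ∧ ∀ y : Fin n × T → ℝ, FeasLP1 d E y →
      ∑ e ∈ E, w e * y e ≤ ∑ e ∈ E, w e * (x e : ℝ) := by
  let f : (Fin n × T → ℝ) →ₗ[ℝ] ℝ := ∑ e ∈ E, w e • LinearMap.proj e
  have hf (y : Fin n × T → ℝ) : f y = ∑ e ∈ E, w e * y e := by simp [f]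
  have hcont : Continuous f := by
    rw [funext hf]
    fun_prop
  have hzero : FeasLP1 d E (0 : Fin n × T → ℝ) := by simp [FeasLP1]
  obtain ⟨y, hy, hmax⟩ :=
    (isCompact_setOf_feasLP1 d E).exists_isMaxOn ⟨0, hzero⟩ hcont.continuousOn
  obtain ⟨x, hx, hxmax⟩ := exists_rat_isMaxOn (fun φ hφ => hy.eventually_comp hφ) f hmax
  refine ⟨x, feasLP1_ratCast_iff.1 hx, fun v hv => ?_⟩
  simpa only [hf, Function.comp_apply] using isMaxOn_iff.1 hxmax v hv

end RationalOptimum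

section FlatOrder

variable {n : ℕ} {T : Type*} [DecidableEq T]

/-- The edges of `F` at the `T`-node of `e` whose `S`-node lies in `L_d ∪ R_d` of the `S`-node
of `e`; these are the edges counted by `ξ̄`. -/
def nearEdges (d : ℕ) (F : Finset (Fin n × T)) (e : Fin n × T) : Finset (Fin n × T) :=
  {f ∈ F | f.2 = e.2 ∧ Nat.dist f.1.val e.1.val < d}

/-- The quantity `ξ + ξ̄` of the edge `e` when `F` is the set of edges that come after it. -/
def conflictWeight {R : Type*} [AddCommMonoid R] (d : ℕ) (x : Fin n × T → R)
    (F : Finset (Fin n × T)) (e : Fin n × T) : R :=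
  ∑ f ∈ F with f.1 = e.1, x f + ∑ f ∈ nearEdges d F e, x f

theorem sum_get_eq_sum_toFinset {α M : Type*} [DecidableEq α] [AddCommMonoid M] {l : List α}
    (hl : l.Nodup) (p : α → Prop) [DecidablePred p] (x : α → M) :
    ∑ j : Fin l.length, (if p (l.get j) then x (l.get j) else 0) =
      ∑ f ∈ l.toFinset with p f, x f := by
  rw [sum_filter, List.sum_toFinset _ hl, ← Fin.sum_univ_fun_getElem]
  rfl

variable {R : Type*} [Field R] [LinearOrder R] [IsStrictOrderedRing R] {d : ℕ} {θ : R}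
  {x : Fin n × T → R} {l : List (Fin n × T)}

namespace IsFlatOrder

theorem mono {θ' : R} (h : IsFlatOrder d θ x l) (hθ : θ ≤ θ') : IsFlatOrder d θ' x l :=
  fun i => (h i).trans (sub_le_sub_right hθ _)

theorem cons {e : Fin n × T} (h : IsFlatOrder d θ x l) (hl : l.Nodup)
    (he : conflictWeight d x l.toFinset e ≤ θ - x e) : IsFlatOrder d θ x (e :: l) := by
  refine Fin.cases ?_ fun i => ?_
  · rw [conflictWeight, nearEdges, ← sum_get_eq_sum_toFinset hl, ← sum_get_eq_sum_toFinset hl] at he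
    simp only [sum_filter, List.length_cons, Fin.sum_univ_succ]
    simpa using he
  · simpa [sum_filter, Fin.sum_univ_succ] using h i

end IsFlatOrder

theorem exists_isFlatOrder_of_forall_exists_conflictWeight_le {E : Finset (Fin n × T)}
    (hfirst : ∀ F ⊆ E, F.Nonempty → ∃ e ∈ F, conflictWeight d x (F.erase e) e ≤ θ - x e) :
    ∃ l : List (Fin n × T), l.Nodup ∧ l.toFinset = E ∧ IsFlatOrder d θ x l := by
  induction E using Finset.strongInduction with
  | H E ih =>
    rcases E.eq_empty_or_nonempty with rfl | hE
    · exact ⟨[], List.nodup_nil, rfl, fun i => i.elim0⟩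
    · obtain ⟨e, he, hle⟩ := hfirst E subset_rfl hE
      obtain ⟨l, hl, hlE, hflat⟩ := ih (E.erase e) (erase_ssubset he)
        fun F hF => hfirst F (hF.trans (erase_subset e E))
      have hel : e ∉ l := by simp [← List.mem_toFinset, hlE]
      refine ⟨e :: l, hl.cons hel, ?_, hflat.cons hl (hlE ▸ hle)⟩
      rw [List.toFinset_cons, hlE, insert_erase he]

end FlatOrder

section LeftmostNode

theorem exists_sum_add_le_two_sub_one_div {ι R : Type*} [Field R] [LinearOrder R]
    [IsStrictOrderedRing R] {K : Finset ι} (hK : K.Nonempty) {x a : ι → R} {D : R} (hD : 1 ≤ D)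
    (hx : ∑ e ∈ K, x e ≤ 1) (hax : ∀ e ∈ K, a e + x e ≤ 1) (ha : ∑ e ∈ K, a e ≤ D - 1) :
    ∃ e ∈ K, ∑ f ∈ K, x f + a e ≤ 2 - 1 / D := by
  set σ := ∑ f ∈ K, x f
  suffices hsum : ∑ e ∈ K, a e ≤ ∑ _e ∈ K, (2 - 1 / D - σ) by
    obtain ⟨e, he, hle⟩ := exists_le_of_sum_le hK hsum
    exact ⟨e, he, by linarith⟩
  have hD0 : 0 < D := one_pos.trans_le hD
  have hk : (1 : R) ≤ #K := by exact_mod_cast hK.card_pos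
  rw [sum_const, nsmul_eq_mul]
  rcases le_total (#K : R) D with hkD | hDk
  · have haK : ∑ e ∈ K, a e ≤ #K - σ := by
      have := sum_le_card_nsmul K _ 1 hax
      rw [sum_add_distrib, nsmul_one] at this
      linarith
    have hkD' : (#K : R) * (1 / D) ≤ 1 := by rwa [mul_one_div, div_le_one hD0]
    nlinarith [mul_nonneg (sub_nonneg.2 hk) (sub_nonneg.2 hx)]
  · have hDinv : 1 / D ≤ 1 := (div_le_one hD0).2 hD
    calc ∑ e ∈ K, a e ≤ D * (1 - 1 / D) := by rwa [mul_sub, mul_one_div_cancel hD0.ne', mul_one]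
      _ ≤ #K * (1 - 1 / D) := mul_le_mul_of_nonneg_right hDk (sub_nonneg.2 hDinv)
      _ ≤ #K * (2 - 1 / D - σ) := mul_le_mul_of_nonneg_left (by linarith) (by linarith)

variable {n : ℕ} {T : Type*} [DecidableEq T] {d : ℕ} {F : Finset (Fin n × T)} {e : Fin n × T}

theorem nearEdges_of_leftmost (hd : 1 ≤ d) (hmin : ∀ f ∈ F, e.1 ≤ f.1) :
    nearEdges d F e = {f ∈ F | f.2 = e.2 ∧ e.1.val ≤ f.1.val ∧ f.1.val < e.1.val + d} := by
  refine filter_congr fun f hf => and_congr_right fun _ => ?_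
  have : e.1.val ≤ f.1.val := hmin f hf
  rw [Nat.dist]
  omega

theorem nearEdges_erase (d : ℕ) (F : Finset (Fin n × T)) (e : Fin n × T) :
    nearEdges d (F.erase e) e = (nearEdges d F e).erase e :=
  filter_erase _ _ _

theorem mem_nearEdges_self (hd : 1 ≤ d) (he : e ∈ F) : e ∈ nearEdges d F e :=
  mem_filter.2 ⟨he, rfl, by rwa [Nat.dist_self]⟩

theorem pairwiseDisjoint_nearEdges_erase (d : ℕ) (F : Finset (Fin n × T)) (s : Fin n) :
    (({e ∈ F | e.1 = s} : Finset (Fin n × T)) : Set (Fin n × T)).PairwiseDisjoint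
      fun e => nearEdges d (F.erase e) e := by
  intro e he e' he' hne
  refine disjoint_left.2 fun f hf hf' => hne (Prod.ext ?_ ?_)
  · exact (mem_filter.1 he).2.trans (mem_filter.1 he').2.symm
  · exact (mem_filter.1 hf).2.1.symm.trans (mem_filter.1 hf').2.1

theorem fst_mem_Ioo_of_mem_nearEdges_erase (hmin : ∀ f ∈ F, e.1 ≤ f.1) {f : Fin n × T}
    (hf : f ∈ nearEdges d (F.erase e) e) : f.1.val ∈ Ioo e.1.val (e.1.val + d) := by
  obtain ⟨hfF, h2, hdist⟩ := mem_filter.1 hf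
  have hne : e.1 ≠ f.1 := fun h => ne_of_mem_erase hfF (Prod.ext h.symm h2)
  have hlt : e.1.val < f.1.val := (hmin f (mem_of_mem_erase hfF)).lt_of_ne hne
  rw [Nat.dist] at hdist
  exact mem_Ioo.2 ⟨hlt, by omega⟩

namespace FeasLP1

variable {R : Type*} [Field R] [LinearOrder R] [IsStrictOrderedRing R]
  {E : Finset (Fin n × T)} {x : Fin n × T → R}

theorem sum_mono (hx : FeasLP1 d E x) {A B : Finset (Fin n × T)} (h : A ⊆ B) :
    ∑ f ∈ A, x f ≤ ∑ f ∈ B, x f :=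
  sum_le_sum_of_subset_of_nonneg h fun f _ _ => hx.1 f

theorem sum_filter_fst_le_one (hx : FeasLP1 d E x) (hFE : F ⊆ E) (s : Fin n) :
    ∑ f ∈ F with f.1 = s, x f ≤ 1 :=
  (hx.sum_mono (filter_subset_filter _ hFE)).trans (hx.2.2.1 s)

theorem sum_le_card_image_fst (hx : FeasLP1 d E x) (hFE : F ⊆ E) :
    ∑ f ∈ F, x f ≤ #(F.image Prod.fst) := by
  rw [← sum_fiberwise_of_maps_to fun f hf => mem_image_of_mem Prod.fst hf, ← nsmul_one]
  exact sum_le_card_nsmul _ _ _ fun s _ => hx.sum_filter_fst_le_one hFE s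

theorem sum_nearEdges_erase_add_le_one (hx : FeasLP1 d E x) (hd : 1 ≤ d) (hFE : F ⊆ E)
    (he : e ∈ F) (hmin : ∀ f ∈ F, e.1 ≤ f.1) :
    ∑ f ∈ nearEdges d (F.erase e) e, x f + x e ≤ 1 := by
  rw [nearEdges_erase, sum_erase_add _ _ (mem_nearEdges_self hd he), nearEdges_of_leftmost hd hmin]
  exact (hx.sum_mono (filter_subset_filter _ hFE)).trans (hx.2.2.2 e.1 e.2)

theorem sum_sum_nearEdges_erase_le (hx : FeasLP1 d E x) (hd : 1 ≤ d) (hFE : F ⊆ E) {s : Fin n}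
    (hmin : ∀ f ∈ F, s ≤ f.1) :
    ∑ e ∈ F with e.1 = s, ∑ f ∈ nearEdges d (F.erase e) e, x f ≤ d - 1 := by
  rw [← sum_biUnion (pairwiseDisjoint_nearEdges_erase d F s)]
  set B := ({e ∈ F | e.1 = s} : Finset (Fin n × T)).biUnion fun e => nearEdges d (F.erase e) e
  have hBE : B ⊆ E := biUnion_subset.2 fun e _ =>
    (filter_subset _ _).trans ((erase_subset _ _).trans hFE)
  have hBcard : #(B.image Prod.fst) ≤ d - 1 := by
    calc #(B.image Prod.fst) ≤ #(Ioo s.val (s.val + d)) := by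
          refine card_le_card_of_injOn Fin.val (fun r hr => ?_) Fin.val_injective.injOn
          obtain ⟨f, hf, rfl⟩ := mem_image.1 hr
          obtain ⟨e, he, hfe⟩ := mem_biUnion.1 hf
          obtain ⟨-, rfl⟩ := mem_filter.1 he
          exact fst_mem_Ioo_of_mem_nearEdges_erase hmin hfe
      _ = d - 1 := by simp
  calc ∑ f ∈ B, x f ≤ #(B.image Prod.fst) := hx.sum_le_card_image_fst hBE
    _ ≤ ((d - 1 : ℕ) : R) := by exact_mod_cast hBcard
    _ = d - 1 := by rw [Nat.cast_sub hd, Nat.cast_one]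

theorem exists_conflictWeight_erase_le (hx : FeasLP1 d E x) (hd : 1 ≤ d) (hFE : F ⊆ E)
    (hF : F.Nonempty) :
    ∃ e ∈ F, conflictWeight d x (F.erase e) e ≤ 2 - 1 / (d : R) - x e := by
  obtain ⟨e₀, he₀, hmin⟩ := F.exists_min_image Prod.fst hF
  obtain ⟨e, he, hle⟩ := exists_sum_add_le_two_sub_one_div
    (K := {e ∈ F | e.1 = e₀.1}) ⟨e₀, mem_filter.2 ⟨he₀, rfl⟩⟩ (by exact_mod_cast hd)
    (hx.sum_filter_fst_le_one hFE e₀.1)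
    (fun e he => hx.sum_nearEdges_erase_add_le_one hd hFE (mem_filter.1 he).1
      ((mem_filter.1 he).2 ▸ hmin))
    (hx.sum_sum_nearEdges_erase_le hd hFE hmin)
  obtain ⟨heF, hes⟩ := mem_filter.1 he
  refine ⟨e, heF, ?_⟩
  rw [← sum_erase_add _ _ he, ← filter_erase, ← hes] at hle
  rw [conflictWeight]
  linarith

theorem exists_isFlatOrder (hx : FeasLP1 d E x) (hd : 1 ≤ d) :
    ∃ l : List (Fin n × T), l.Nodup ∧ l.toFinset = E ∧ IsFlatOrder d (2 - 1 / (d : R)) x l :=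
  exists_isFlatOrder_of_forall_exists_conflictWeight_le
    fun _ hFE hF => hx.exists_conflictWeight_erase_le hd hFE hF

end FeasLP1

end LeftmostNode

theorem stmt5_general {n : ℕ} {T : Type*} [DecidableEq T] (d : ℕ) (hd : 1 ≤ d)
    (E : Finset (Fin n × T)) (w : Fin n × T → ℝ) :
    ∃ x : Fin n × T → ℚ, FeasLP1 d E x ∧
      (∀ y : Fin n × T → ℝ, FeasLP1 d E y →
        ∑ e ∈ E, w e * y e ≤ ∑ e ∈ E, w e * (x e : ℝ)) ∧
      ∃ l : List (Fin n × T), l.Nodup ∧ l.toFinset = E ∧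
        IsFlatOrder d (2 - 1 / (d : ℚ)) x l := by
  obtain ⟨x, hx, hopt⟩ := exists_rat_optimal_feasLP1 d E w
  exact ⟨x, hx, hopt, hx.exists_isFlatOrder hd⟩

/-- There exist a rational optimal solution `x` of LP1 and an order of the edges that is
`(2 − 1/(2d−1))`-flat with respect to `x`. -/
theorem stmt5 {n : ℕ} {T : Type*} [DecidableEq T]
    (d : ℕ) (hd : 1 ≤ d) (E : Finset (Fin n × T))
    (w : Fin n × T → ℝ) (hw : ∀ e ∈ E, 0 ≤ w e) :
    ∃ x : Fin n × T → ℚ, FeasLP1 d E x ∧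
      (∀ y : Fin n × T → ℝ, FeasLP1 d E y →
        ∑ e ∈ E, w e * y e ≤ ∑ e ∈ E, w e * (x e : ℝ)) ∧
      ∃ l : List (Fin n × T), l.Nodup ∧ l.toFinset = E ∧
        IsFlatOrder d (2 - 1 / (2 * (d : ℚ) - 1)) x l := by
  obtain ⟨x, hx, hopt, l, hl, hlE, hflat⟩ := stmt5_general d hd E w
  have hd' : (1 : ℚ) ≤ d := by exact_mod_cast hd
  exact ⟨x, hx, hopt, l, hl, hlE, hflat.mono (by gcongr; linarith)⟩
end
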